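/- Let n be an even positive integer and Θ an invertible real skew-symmetric n×n matrix. For all Schwartz functions f, g ∈ 𝒮(ℝ^n, ℂ), the Moyal product f ⋆_Θ g is again a Schwartz function, and ∫_{ℝ^n} (f ⋆_Θ g)(x) dx = ∫_{ℝ^n} f(x) g(x) dx. -/

import Mathlib

open MeasureTheory Real

/-- The Moyal product of two functions on `ℝ^n`, for an invertible deformation
matrix `Θ`:
`(f ⋆_Θ g)(x) = (πⁿ |det Θ|)⁻¹ ∫∫ f(x+u) g(x+v) e^{-2i⟨u, Θ⁻¹v⟩} du dv`. -/
noncomputable def moyal (n : ℕ) (Θ : Matrix (Fin n) (Fin n) ℝ)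
    (f g : (Fin n → ℝ) → ℂ) : (Fin n → ℝ) → ℂ := fun x =>
  (((π ^ n * |Θ.det|)⁻¹ : ℝ) : ℂ) *
    ∫ u : Fin n → ℝ, ∫ v : Fin n → ℝ,
      f (x + u) * g (x + v) *
        Complex.exp (-2 * Complex.I * ((∑ i, u i * Θ⁻¹.mulVec v i : ℝ) : ℂ))

/-!
Write `J = π Θᵀ`. The substitution `u = J ξ` turns the phase `⟨u, Θ⁻¹ v⟩` into `π ⟨ξ, v⟩`, so the
inner integral becomes a Fourier transform and
`(f ⋆_Θ g)(x) = ∫ 𝐞(⟨ξ, x⟩) f(x + J ξ) 𝓕g(ξ) dξ`.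
The integrand is a Schwartz function of `(ξ, x)`, and integrating out one variable of a Schwartz
function leaves a Schwartz function of the other. Integrating over `x` first instead gives
`∫ 𝐞(-⟨ξ, J ξ⟩) 𝓕⁻f(ξ) 𝓕g(ξ) dξ`; since `⟨ξ, J ξ⟩ = 0` for skew-symmetric `J`, this is `∫ f g` by
Parseval.
-/

open scoped SchwartzMap FourierTransform ContDiff Matrix InnerProductSpace

section FourierChar

lemma iteratedDeriv_fourierChar (n : ℕ) :
    iteratedDeriv n (𝐞 · : ℝ → ℂ) = fun t => (2 * π * Complex.I) ^ n * 𝐞 t := by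
  induction n with
  | zero => simp only [iteratedDeriv_zero, pow_zero, one_mul]
  | succ n ih =>
    funext t
    rw [iteratedDeriv_succ, ih, deriv_const_mul _ (differentiable_fourierChar t),
      deriv_fourierChar]
    ring

lemma hasTemperateGrowth_fourierChar : (𝐞 · : ℝ → ℂ).HasTemperateGrowth := by
  refine ⟨contDiff_of_differentiable_iteratedDeriv fun n _ => ?_,
    fun n => ⟨0, (2 * π) ^ n, fun t => ?_⟩⟩
  · rw [iteratedDeriv_fourierChar]
    exact differentiable_fourierChar.const_mul _
  · rw [norm_iteratedFDeriv_eq_norm_iteratedDeriv, iteratedDeriv_fourierChar]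
    simp [abs_of_pos pi_pos, Circle.norm_coe]

lemma hasTemperateGrowth_fourierChar_inner {E : Type*} [NormedAddCommGroup E]
    [InnerProductSpace ℝ E] :
    (fun z : E × E => (𝐞 ⟪z.1, z.2⟫_ℝ : ℂ)).HasTemperateGrowth :=
  hasTemperateGrowth_fourierChar.comp <| (innerSL ℝ (E := E)).bilinear_hasTemperateGrowth
    (ContinuousLinearMap.fst ℝ E E).hasTemperateGrowth
    (ContinuousLinearMap.snd ℝ E E).hasTemperateGrowth

end FourierChar

section ParametricIntegral

variable {α E F : Type*} [MeasurableSpace α] {μ : Measure α}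
  [NormedAddCommGroup E] [NormedSpace ℝ E] [NormedAddCommGroup F] [NormedSpace ℝ F]

lemma curryLeft_integral {n : ℕ} (φ : α → E [×n + 1]→L[ℝ] F) :
    (∫ a, φ a ∂μ).curryLeft = ∫ a, (φ a).curryLeft ∂μ :=
  let curry : (E [×n + 1]→L[ℝ] F) ≃L[ℝ] (E →L[ℝ] E [×n]→L[ℝ] F) :=
    (continuousMultilinearCurryLeftEquiv ℝ (fun _ : Fin (n + 1) => E) F).toContinuousLinearEquiv
  (ContinuousLinearEquiv.integral_comp_comm (𝕜 := ℝ) (E := E [×n + 1]→L[ℝ] F)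
    (F := E →L[ℝ] E [×n]→L[ℝ] F) curry φ).symm

theorem hasFTaylorSeriesUpTo_integral_of_dominated {f : E → α → F} {bound : ℕ → α → ℝ}
    (hf : ∀ᵐ a ∂μ, ContDiff ℝ ∞ (f · a))
    (hmeas : ∀ n x, AEStronglyMeasurable (fun a => iteratedFDeriv ℝ n (f · a) x) μ)
    (hbound : ∀ n, ∀ᵐ a ∂μ, ∀ x, ‖iteratedFDeriv ℝ n (f · a) x‖ ≤ bound n a)
    (hint : ∀ n, Integrable (bound n) μ) :
    HasFTaylorSeriesUpTo ∞ (fun x => ∫ a, f x a ∂μ)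
      (fun x n => ∫ a, iteratedFDeriv ℝ n (f · a) x ∂μ) := by
  refine (hasFTaylorSeriesUpTo_top_iff' le_rfl).2 ⟨fun x => ?_, fun n x => ?_⟩
  · exact ((continuousMultilinearCurryFin0 ℝ E F).toContinuousLinearEquiv.integral_comp_comm _).symm
  · rw [curryLeft_integral]
    refine hasFDerivAt_integral_of_dominated_of_fderiv_le
      (F' := fun x a => (iteratedFDeriv ℝ (n + 1) (f · a) x).curryLeft) Filter.univ_mem
      (.of_forall (hmeas n)) ((hint n).mono' (hmeas n x) ?integrand_bound)
      ((continuousMultilinearCurryLeftEquiv ℝ (fun _ : Fin (n + 1) => E)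
        F).continuous.comp_aestronglyMeasurable (hmeas (n + 1) x))
      ?derivative_bound (hint (n + 1)) ?derivative
    case integrand_bound =>
      filter_upwards [hbound n] with a ha using ha x
    case derivative_bound =>
      filter_upwards [hbound (n + 1)] with a ha y _
      exact (ContinuousMultilinearMap.curryLeft_norm _).trans_le (ha y)
    case derivative =>
      filter_upwards [hf] with a ha y _
      exact ha.ftaylorSeries.fderiv n (mod_cast ENat.natCast_lt_top n) y

end ParametricIntegral

section SchwartzProduct

lemma norm_prod_le_one_add_mul_one_add {E W : Type*} [NormedAddCommGroup E]
    [NormedAddCommGroup W] (z : W × E) : ‖z‖ ≤ (1 + ‖z.1‖) * (1 + ‖z.2‖) := by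
  have h₁ := norm_nonneg z.1
  have h₂ := norm_nonneg z.2
  exact max_le (by nlinarith) (by nlinarith)

variable {D E W F F₁ F₂ : Type*} [NormedAddCommGroup D] [NormedSpace ℝ D]
  [NormedAddCommGroup E] [NormedSpace ℝ E] [NormedAddCommGroup W] [NormedSpace ℝ W]
  [NormedAddCommGroup F] [NormedSpace ℝ F] [NormedAddCommGroup F₁] [NormedSpace ℝ F₁]
  [NormedAddCommGroup F₂] [NormedSpace ℝ F₂]

lemma exists_one_add_norm_pow_mul_norm_iteratedFDeriv_le (f : 𝓢(E, F)) (k n : ℕ) :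
    ∃ C, ∀ x, (1 + ‖x‖) ^ k * ‖iteratedFDeriv ℝ n f x‖ ≤ C :=
  ⟨_, SchwartzMap.one_add_le_sup_seminorm_apply (𝕜 := ℝ) (m := (k, n)) le_rfl le_rfl f⟩

lemma exists_one_add_norm_pow_mul_norm_iteratedFDeriv_comp_le (f : 𝓢(E, F)) (L : D →L[ℝ] E)
    (k n : ℕ) : ∃ C, ∀ x, (1 + ‖L x‖) ^ k * ‖iteratedFDeriv ℝ n (f ∘ L) x‖ ≤ C := by
  obtain ⟨C, hC⟩ := exists_one_add_norm_pow_mul_norm_iteratedFDeriv_le f k n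
  refine ⟨C * ‖L‖ ^ n, fun x => ?_⟩
  have chain : ‖iteratedFDeriv ℝ n (f ∘ L) x‖ ≤ ‖iteratedFDeriv ℝ n f (L x)‖ * ‖L‖ ^ n := by
    rw [L.iteratedFDeriv_comp_right (f.smooth n) x le_rfl]
    simpa using ContinuousMultilinearMap.norm_compContinuousLinearMap_le _ fun _ : Fin n => L
  calc (1 + ‖L x‖) ^ k * ‖iteratedFDeriv ℝ n (f ∘ L) x‖
      ≤ (1 + ‖L x‖) ^ k * (‖iteratedFDeriv ℝ n f (L x)‖ * ‖L‖ ^ n) := by gcongr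
    _ = ((1 + ‖L x‖) ^ k * ‖iteratedFDeriv ℝ n f (L x)‖) * ‖L‖ ^ n := by ring
    _ ≤ C * ‖L‖ ^ n := by gcongr; exact hC (L x)

/-- The external product `(w, x) ↦ B (g w) (f x)` of two Schwartz functions along a bilinear
map `B`. For the multiplication of `ℂ` it is the tensor product `g ⊗ f`. -/
noncomputable def schwartzExternalProduct (B : F₁ →L[ℝ] F₂ →L[ℝ] F) (g : 𝓢(W, F₁))
    (f : 𝓢(E, F₂)) : 𝓢(W × E, F) where
  toFun z := B (g z.1) (f z.2)
  smooth' := by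
    have hg : ContDiff ℝ ∞ fun z : W × E => g z.1 := (g.smooth ⊤).comp contDiff_fst
    have hf : ContDiff ℝ ∞ fun z : W × E => f z.2 := (f.smooth ⊤).comp contDiff_snd
    exact B.isBoundedBilinearMap.contDiff.comp (hg.prodMk hf)
  decay' k n := by
    let p₁ := ContinuousLinearMap.fst ℝ W E
    let p₂ := ContinuousLinearMap.snd ℝ W E
    choose C₁ hC₁ using exists_one_add_norm_pow_mul_norm_iteratedFDeriv_comp_le g p₁ k
    choose C₂ hC₂ using exists_one_add_norm_pow_mul_norm_iteratedFDeriv_comp_le f p₂ k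
    refine ⟨‖B‖ * ∑ i ∈ Finset.range (n + 1), n.choose i * C₁ i * C₂ (n - i), fun z => ?_⟩
    have leibniz := B.norm_iteratedFDeriv_le_of_bilinear ((g.smooth n).comp p₁.contDiff)
      ((f.smooth n).comp p₂.contDiff) z le_rfl
    have hC₁_nonneg (i : ℕ) : 0 ≤ C₁ i := le_trans (by positivity) (hC₁ i z)
    calc ‖z‖ ^ k * ‖iteratedFDeriv ℝ n (fun z => B (g z.1) (f z.2)) z‖
        ≤ ((1 + ‖p₁ z‖) * (1 + ‖p₂ z‖)) ^ k * (‖B‖ * ∑ i ∈ Finset.range (n + 1), n.choose i *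
            ‖iteratedFDeriv ℝ i (g ∘ p₁) z‖ * ‖iteratedFDeriv ℝ (n - i) (f ∘ p₂) z‖) := by
          gcongr
          exacts [norm_prod_le_one_add_mul_one_add z, leibniz]
      _ = ‖B‖ * ∑ i ∈ Finset.range (n + 1),
            n.choose i * ((1 + ‖p₁ z‖) ^ k * ‖iteratedFDeriv ℝ i (g ∘ p₁) z‖) *
              ((1 + ‖p₂ z‖) ^ k * ‖iteratedFDeriv ℝ (n - i) (f ∘ p₂) z‖) := by
          simp only [mul_pow, Finset.mul_sum]
          exact Finset.sum_congr rfl fun i _ => by ring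
      _ ≤ ‖B‖ * ∑ i ∈ Finset.range (n + 1), n.choose i * C₁ i * C₂ (n - i) := by
          gcongr with i
          · exact mul_nonneg (by positivity) (hC₁_nonneg i)
          · exact hC₁ i z
          · exact hC₂ (n - i) z

lemma iteratedFDeriv_comp_prodMk_right {H : W × E → F} {n : ℕ} (hH : ContDiff ℝ n H) (w : W)
    (x : E) : iteratedFDeriv ℝ n (fun x => H (w, x)) x =
      (iteratedFDeriv ℝ n H (w, x)).compContinuousLinearMap
        fun _ => ContinuousLinearMap.inr ℝ W E := by
  have translate : (fun x => H (w, x)) =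
      (fun z => H ((w, 0) + z)) ∘ ContinuousLinearMap.inr ℝ W E := by
    funext x; simp
  rw [translate, ContinuousLinearMap.iteratedFDeriv_comp_right _ (by fun_prop) x le_rfl,
    iteratedFDeriv_comp_add_left]
  simp

lemma norm_iteratedFDeriv_comp_prodMk_right_le {H : W × E → F} {n : ℕ} (hH : ContDiff ℝ n H)
    (w : W) (x : E) :
    ‖iteratedFDeriv ℝ n (fun x => H (w, x)) x‖ ≤ ‖iteratedFDeriv ℝ n H (w, x)‖ := by
  rw [iteratedFDeriv_comp_prodMk_right hH]
  refine (ContinuousMultilinearMap.norm_compContinuousLinearMap_le _ _).trans ?_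
  refine mul_le_of_le_one_right (norm_nonneg _) (Finset.prod_le_one (fun _ _ => norm_nonneg _) ?_)
  exact fun _ _ => ContinuousLinearMap.norm_inr_le_one ..

lemma exists_norm_pow_mul_norm_iteratedFDeriv_comp_prodMk_right_le (H : 𝓢(W × E, F))
    (k l n : ℕ) : ∃ C, ∀ w x, ‖x‖ ^ k * ‖iteratedFDeriv ℝ n (fun x => H (w, x)) x‖ ≤
      C * (1 + ‖w‖) ^ (-(l : ℝ)) := by
  obtain ⟨C, hC⟩ := exists_one_add_norm_pow_mul_norm_iteratedFDeriv_le H (k + l) n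
  refine ⟨C, fun w x => ?_⟩
  rw [rpow_neg (by positivity), rpow_natCast, ← div_eq_mul_inv, le_div_iff₀ (by positivity)]
  have hx : ‖x‖ ≤ 1 + ‖(w, x)‖ := (norm_snd_le (w, x)).trans (le_add_of_nonneg_left zero_le_one)
  have hw : ‖w‖ ≤ ‖(w, x)‖ := norm_fst_le (w, x)
  calc ‖x‖ ^ k * ‖iteratedFDeriv ℝ n (fun x => H (w, x)) x‖ * (1 + ‖w‖) ^ l
      ≤ (1 + ‖(w, x)‖) ^ k * ‖iteratedFDeriv ℝ n H (w, x)‖ * (1 + ‖(w, x)‖) ^ l := by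
        gcongr
        exact norm_iteratedFDeriv_comp_prodMk_right_le (H.smooth n) w x
    _ = (1 + ‖(w, x)‖) ^ (k + l) * ‖iteratedFDeriv ℝ n H (w, x)‖ := by ring
    _ ≤ C := hC (w, x)

variable [MeasurableSpace W] [OpensMeasurableSpace W] [SecondCountableTopology W]
  (μ : Measure W) [μ.HasTemperateGrowth]

theorem hasFTaylorSeriesUpTo_integral_schwartz (H : 𝓢(W × E, F)) :
    HasFTaylorSeriesUpTo ∞ (fun x => ∫ w, H (w, x) ∂μ)
      (fun x n => ∫ w, iteratedFDeriv ℝ n (fun x => H (w, x)) x ∂μ) := by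
  choose C hC using
    exists_norm_pow_mul_norm_iteratedFDeriv_comp_prodMk_right_le H 0 μ.integrablePower
  refine hasFTaylorSeriesUpTo_integral_of_dominated
    (bound := fun n w => C n * (1 + ‖w‖) ^ (-(μ.integrablePower : ℝ)))
    (.of_forall fun w => (H.smooth ⊤).comp (contDiff_prodMk_right w))
    (fun n x => Continuous.aestronglyMeasurable ?_)
    (fun n => .of_forall fun w x => by simpa only [pow_zero, one_mul] using hC n w x)
    (fun n => μ.integrable_pow_neg_integrablePower.const_mul (C n))
  simp only [iteratedFDeriv_comp_prodMk_right (H.smooth n)]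
  exact (ContinuousMultilinearMap.compContinuousLinearMapL
    fun _ => ContinuousLinearMap.inr ℝ W E).continuous.comp
      (((H.smooth n).continuous_iteratedFDeriv le_rfl).comp (by fun_prop))

/-- The Schwartz function `x ↦ ∫ w, H (w, x) ∂μ` obtained by integrating out the first variable of
a Schwartz function `H` on a product. -/
noncomputable def schwartzIntegralFst (H : 𝓢(W × E, F)) : 𝓢(E, F) where
  toFun x := ∫ w, H (w, x) ∂μ
  smooth' := (hasFTaylorSeriesUpTo_integral_schwartz μ H).contDiff
  decay' k n := by
    obtain ⟨C, hC⟩ :=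
      exists_norm_pow_mul_norm_iteratedFDeriv_comp_prodMk_right_le H k μ.integrablePower n
    refine ⟨∫ w, C * (1 + ‖w‖) ^ (-(μ.integrablePower : ℝ)) ∂μ, fun x => ?_⟩
    rw [← (hasFTaylorSeriesUpTo_integral_schwartz μ H).eq_iteratedFDeriv
      (mod_cast le_top) x]
    calc ‖x‖ ^ k * ‖∫ w, iteratedFDeriv ℝ n (fun x => H (w, x)) x ∂μ‖
        = ‖∫ w, ‖x‖ ^ k • iteratedFDeriv ℝ n (fun x => H (w, x)) x ∂μ‖ := by
          rw [integral_smul, norm_smul, norm_pow, norm_norm]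
      _ ≤ ∫ w, C * (1 + ‖w‖) ^ (-(μ.integrablePower : ℝ)) ∂μ := by
          refine norm_integral_le_of_norm_le
            (μ.integrable_pow_neg_integrablePower.const_mul C) (.of_forall fun w => ?_)
          rw [norm_smul, norm_pow, norm_norm]
          exact hC w x

lemma schwartzIntegralFst_apply (H : 𝓢(W × E, F)) (x : E) :
    schwartzIntegralFst μ H x = ∫ w, H (w, x) ∂μ := rfl

end SchwartzProduct

section TwistedProduct

variable {E F : Type*} [NormedAddCommGroup E] [InnerProductSpace ℝ E] [FiniteDimensional ℝ E]
  [MeasurableSpace E] [BorelSpace E] [NormedAddCommGroup F] [NormedSpace ℂ F]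

/-- The Schwartz function `(ξ, x) ↦ 𝐞(⟪ξ, x⟫) f(x + A ξ) 𝓕g(ξ)`. Its integral over `ξ` is the
coordinate-free form of the Moyal product, with `A = π Θᵀ`. -/
noncomputable def twistedKernel (A : E →L[ℝ] E) (f : 𝓢(E, ℂ)) (g : 𝓢(E, F)) : 𝓢(E × E, F) :=
  SchwartzMap.smulLeftCLM F (fun z : E × E => (𝐞 ⟪z.1, z.2⟫_ℝ : ℂ)) <|
    SchwartzMap.compCLMOfContinuousLinearEquiv ℂ
      ((ContinuousLinearEquiv.refl ℝ E).skewProd (.refl ℝ E) A) <|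
        schwartzExternalProduct (ContinuousLinearMap.lsmul ℝ ℂ).flip (𝓕 g) f

lemma twistedKernel_apply (A : E →L[ℝ] E) (f : 𝓢(E, ℂ)) (g : 𝓢(E, F)) (ξ x : E) :
    twistedKernel A f g (ξ, x) = 𝐞 ⟪ξ, x⟫_ℝ • f (x + A ξ) • 𝓕 g ξ := by
  rw [twistedKernel, SchwartzMap.smulLeftCLM_apply_apply hasTemperateGrowth_fourierChar_inner]
  rfl

/-- The twisted product `x ↦ ∫ 𝐞(⟪ξ, x⟫) f(x + A ξ) 𝓕g(ξ) dξ`. The Moyal product is the case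
`A = π Θᵀ`. -/
noncomputable def twistedProduct (A : E →L[ℝ] E) (f : 𝓢(E, ℂ)) (g : 𝓢(E, F)) : 𝓢(E, F) :=
  schwartzIntegralFst volume (twistedKernel A f g)

lemma twistedProduct_apply (A : E →L[ℝ] E) (f : 𝓢(E, ℂ)) (g : 𝓢(E, F)) (x : E) :
    twistedProduct A f g x = ∫ ξ, 𝐞 ⟪ξ, x⟫_ℝ • f (x + A ξ) • 𝓕 g ξ := by
  simp only [twistedProduct, schwartzIntegralFst_apply, twistedKernel_apply]

variable [CompleteSpace F]

lemma integral_twistedKernel_snd {A : E →L[ℝ] E} (f : 𝓢(E, ℂ)) (g : 𝓢(E, F)) {ξ : E}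
    (hA : ⟪ξ, A ξ⟫_ℝ = 0) : ∫ x, twistedKernel A f g (ξ, x) = 𝓕⁻ f ξ • 𝓕 g ξ := by
  have phase (x : E) : ⟪ξ, x⟫_ℝ = ⟪x + A ξ, ξ⟫_ℝ := by
    rw [inner_add_left, real_inner_comm ξ (A ξ), hA, add_zero, real_inner_comm]
  calc ∫ x, twistedKernel A f g (ξ, x)
      = (∫ x, 𝐞 ⟪x + A ξ, ξ⟫_ℝ • f (x + A ξ)) • 𝓕 g ξ := by
        simp only [twistedKernel_apply, phase, ← smul_assoc, integral_smul_const]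
    _ = (∫ y, 𝐞 ⟪y, ξ⟫_ℝ • f y) • 𝓕 g ξ := by
        rw [integral_add_right_eq_self fun y => 𝐞 ⟪y, ξ⟫_ℝ • f y]
    _ = 𝓕⁻ f ξ • 𝓕 g ξ := by rw [SchwartzMap.fourierInv_coe, Real.fourierInv_eq]

theorem integral_twistedProduct {A : E →L[ℝ] E} (hA : ∀ ξ, ⟪ξ, A ξ⟫_ℝ = 0) (f : 𝓢(E, ℂ))
    (g : 𝓢(E, F)) : ∫ x, twistedProduct A f g x = ∫ x, f x • g x :=
  calc ∫ x, twistedProduct A f g x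
      = ∫ ξ, ∫ x, twistedKernel A f g (ξ, x) :=
        integral_integral_swap ((twistedKernel A f g).integrable (μ := volume.prod volume)).swap
    _ = ∫ ξ, 𝓕⁻ f ξ • 𝓕 g ξ := by simp only [integral_twistedKernel_snd f g (hA _)]
    _ = ∫ x, f x • g x := by
        rw [SchwartzMap.integral_fourierInv_smul_eq, FourierTransform.fourierInv_fourier_eq]

end TwistedProduct

section Moyal

variable {ι : Type*} [Fintype ι]

lemma dotProduct_mulVec_self_eq_zero {R : Type*} [CommRing R] [IsAddTorsionFree R]
    {M : Matrix ι ι R} (hM : Mᵀ = -M) (x : ι → R) : x ⬝ᵥ M *ᵥ x = 0 := by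
  rw [← self_eq_neg]
  calc x ⬝ᵥ M *ᵥ x = Mᵀ *ᵥ x ⬝ᵥ x := by rw [Matrix.dotProduct_mulVec, Matrix.mulVec_transpose]
    _ = -(x ⬝ᵥ M *ᵥ x) := by rw [hM, Matrix.neg_mulVec, neg_dotProduct, dotProduct_comm]

lemma transpose_mulVec_dotProduct_inv_mulVec {R : Type*} [CommRing R] [DecidableEq ι]
    {M : Matrix ι ι R} (hM : IsUnit M.det) (x y : ι → R) : Mᵀ *ᵥ x ⬝ᵥ M⁻¹ *ᵥ y = x ⬝ᵥ y := by
  rw [Matrix.mulVec_transpose, ← Matrix.dotProduct_mulVec, Matrix.mulVec_mulVec,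
    Matrix.mul_nonsing_inv _ hM, Matrix.one_mulVec]

lemma abs_det_smul_integral_comp_mulVec [DecidableEq ι] {G : Type*} [NormedAddCommGroup G]
    [NormedSpace ℝ G] {M : Matrix ι ι ℝ} (hM : IsUnit M.det) (φ : (ι → ℝ) → G) :
    |M.det| • ∫ ξ, φ (M *ᵥ ξ) = ∫ u, φ u := by
  have hbij : Function.Bijective M.mulVec := by
    rw [← Matrix.isUnit_iff_isUnit_det] at hM
    exact ⟨Matrix.mulVec_injective_iff_isUnit.2 hM, Matrix.mulVec_surjective_iff_isUnit.2 hM⟩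
  let L := (Matrix.toLin' M).toContinuousLinearMap
  calc |M.det| • ∫ ξ, φ (M *ᵥ ξ)
      = ∫ ξ in Set.univ, |L.det| • φ (M *ᵥ ξ) := by
        rw [Measure.restrict_univ, integral_smul, ContinuousLinearMap.det, ← LinearMap.det_toLin' M]
        rfl
    _ = ∫ u in (M *ᵥ ·) '' Set.univ, φ u :=
        (integral_image_eq_integral_abs_det_fderiv_smul volume .univ
          (fun x _ => L.hasFDerivWithinAt) hbij.1.injOn φ).symm
    _ = ∫ u, φ u := by rw [Set.image_univ, hbij.2.range_eq, Measure.restrict_univ]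

lemma integral_comp_toLp {G : Type*} [NormedAddCommGroup G] [NormedSpace ℝ G]
    (φ : EuclideanSpace ℝ ι → G) : ∫ x : ι → ℝ, φ (WithLp.toLp 2 x) = ∫ x, φ x :=
  (PiLp.volume_preserving_toLp ι).integral_comp
    (MeasurableEquiv.toLp 2 (ι → ℝ)).measurableEmbedding φ

lemma inner_toEuclideanCLM_self_eq_zero [DecidableEq ι] {M : Matrix ι ι ℝ} (hM : Mᵀ = -M)
    (x : EuclideanSpace ℝ ι) : ⟪x, Matrix.toEuclideanCLM (𝕜 := ℝ) M x⟫_ℝ = 0 := by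
  rw [EuclideanSpace.inner_eq_star_dotProduct, star_trivial, dotProduct_comm]
  exact dotProduct_mulVec_self_eq_zero hM x

variable {G : Type*} [NormedAddCommGroup G] [NormedSpace ℂ G]

lemma fourier_toLp (g : EuclideanSpace ℝ ι → G) (ξ : ι → ℝ) :
    𝓕 g (WithLp.toLp 2 ξ) = ∫ v : ι → ℝ, 𝐞 (-(v ⬝ᵥ ξ)) • g (WithLp.toLp 2 v) := by
  simp only [Real.fourier_eq, ← integral_comp_toLp, EuclideanSpace.inner_toLp_toLp, star_trivial,
    dotProduct_comm]

lemma integral_fourierChar_dotProduct_smul_comp_add (g : (ι → ℝ) → G) (x ξ : ι → ℝ) :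
    ∫ v, 𝐞 (-(v ⬝ᵥ ξ)) • g (x + v) = 𝐞 (x ⬝ᵥ ξ) • ∫ v, 𝐞 (-(v ⬝ᵥ ξ)) • g v := by
  simp only [add_comm x]
  exact congr_fun
    (VectorFourier.fourierIntegral_comp_add_right 𝐞 volume (dotProductBilin ℝ ℝ) g x) ξ

lemma moyal_eq_integral {n : ℕ} {Θ : Matrix (Fin n) (Fin n) ℝ} (hΘ : IsUnit Θ.det)
    (f g : (Fin n → ℝ) → ℂ) (x : Fin n → ℝ) :
    moyal n Θ f g x =
      ∫ ξ, f (x + (π • Θᵀ) *ᵥ ξ) * ∫ v, 𝐞 (-(v ⬝ᵥ ξ)) • g (x + v) := by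
  have hdet : |(π • Θᵀ).det| = π ^ n * |Θ.det| := by
    rw [Matrix.det_smul, Matrix.det_transpose, abs_mul, abs_pow, abs_of_pos pi_pos,
      Fintype.card_fin]
  have hunit : IsUnit (π • Θᵀ).det := by
    rw [Matrix.det_smul, Matrix.det_transpose]
    exact (pi_ne_zero.isUnit.pow _).mul hΘ
  have phase (ξ v : Fin n → ℝ) :
      Complex.exp (-2 * Complex.I * (((π • Θᵀ) *ᵥ ξ ⬝ᵥ Θ⁻¹ *ᵥ v : ℝ) : ℂ)) = 𝐞 (-(v ⬝ᵥ ξ)) := by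
    rw [Matrix.smul_mulVec, smul_dotProduct, transpose_mulVec_dotProduct_inv_mulVec hΘ,
      dotProduct_comm, smul_eq_mul, Real.fourierChar_apply]
    push_cast
    ring_nf
  rw [moyal, ← abs_det_smul_integral_comp_mulVec hunit, hdet, Complex.real_smul, ← mul_assoc,
    ← Complex.ofReal_mul, inv_mul_cancel₀ (hdet ▸ abs_ne_zero.2 hunit.ne_zero),
    Complex.ofReal_one, one_mul]
  simp only [← dotProduct.eq_1, phase, Circle.smul_def, smul_eq_mul, ← integral_const_mul]
  simp only [mul_assoc, mul_comm (g _)]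

theorem moyal_eq_twistedProduct {n : ℕ} {Θ : Matrix (Fin n) (Fin n) ℝ} (hΘ : IsUnit Θ.det)
    (f g : 𝓢(EuclideanSpace ℝ (Fin n), ℂ)) (x : Fin n → ℝ) :
    moyal n Θ (f ∘ WithLp.toLp 2) (g ∘ WithLp.toLp 2) x =
      twistedProduct (Matrix.toEuclideanCLM (𝕜 := ℝ) (π • Θᵀ)) f g (WithLp.toLp 2 x) := by
  rw [moyal_eq_integral hΘ, twistedProduct_apply, ← integral_comp_toLp]
  congr! 2 with ξ
  rw [integral_fourierChar_dotProduct_smul_comp_add, mul_smul_comm,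
    EuclideanSpace.inner_toLp_toLp, star_trivial, Matrix.toEuclideanCLM_toLp,
    SchwartzMap.fourier_coe, fourier_toLp]
  rfl

end Moyal

/-- The Moyal product of two Schwartz functions is a Schwartz function, and
integration is a trace for the Moyal product:
`∫ (f ⋆_Θ g) = ∫ f g`. -/
theorem moyal_trace_property
    (n : ℕ) (hn : 0 < n) (he : Even n)
    (Θ : Matrix (Fin n) (Fin n) ℝ) (hskew : Θ.transpose = -Θ)
    (hdet : IsUnit Θ.det)
    (f g : SchwartzMap (Fin n → ℝ) ℂ) :
    (∃ h : SchwartzMap (Fin n → ℝ) ℂ, ⇑h = moyal n Θ ⇑f ⇑g) ∧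
      (∫ x : Fin n → ℝ, moyal n Θ (⇑f) (⇑g) x) = ∫ x : Fin n → ℝ, f x * g x := by
  let e := EuclideanSpace.equiv (Fin n) ℝ
  let f' := SchwartzMap.compCLMOfContinuousLinearEquiv ℂ e f
  let g' := SchwartzMap.compCLMOfContinuousLinearEquiv ℂ e g
  let A := Matrix.toEuclideanCLM (𝕜 := ℝ) (π • Θᵀ)
  have moyal_eq : moyal n Θ f g = twistedProduct A f' g' ∘ WithLp.toLp 2 :=
    funext (moyal_eq_twistedProduct hdet f' g')
  have A_skew (ξ : EuclideanSpace ℝ (Fin n)) : ⟪ξ, A ξ⟫_ℝ = 0 :=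
    inner_toEuclideanCLM_self_eq_zero (by simp [hskew]) ξ
  refine ⟨⟨SchwartzMap.compCLMOfContinuousLinearEquiv ℂ e.symm (twistedProduct A f' g'),
    moyal_eq.symm⟩, ?_⟩
  calc ∫ x, moyal n Θ f g x
      = ∫ x, twistedProduct A f' g' x := by rw [moyal_eq]; exact integral_comp_toLp _
    _ = ∫ x, f' x • g' x := integral_twistedProduct A_skew f' g'
    _ = ∫ x, f x * g x := (integral_comp_toLp _).symm
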